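/- Let G be a group, L a field of characteristic different from 2, and σ : G → GSp₄(L) a group homomorphism. Suppose there exists a two-dimensional L-subspace W of L⁴ that is invariant under σ(g) for every g ∈ G and on which the alternating form is nondegenerate, i.e. for every nonzero x ∈ W there is y ∈ W with xᵀJy ≠ 0. Then there exists T ∈ GL₄(L) such that Tσ(g)T⁻¹ ∈ H(L) for every g ∈ G. -/

import Mathlib

/-!
Write `B x y = xᵀ J y`. Since `B` is nondegenerate on the plane `W`, there are `e₀, e₃ ∈ W` with
`B e₀ e₃ = 1`, and they span `W`. Its orthogonal complement contains a nonzero `e₁`, and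
nondegeneracy of `B` on `L⁴`, after projection along `W`, gives `e₂` in that complement with
`B e₁ e₂ = 1`. The matrix `S` with columns `e₀, e₁, e₂, e₃` is therefore symplectic
(`exists_symplectic_basis`), and `T = S⁻¹ = -J Sᵀ J` works.

For `m = σ g`, `T m S = -J N` with `N i j = B eᵢ (m eⱼ)`. The off-block entries of `N` vanish
because `m` preserves `W`, and because it also preserves the orthogonal complement of `W`: it scales
`B` by its multiplier, and `σ g⁻¹` preserves `W` as well. As left multiplication by `J` only permutes
rows inside the blocks `{0, 3}` and `{1, 2}` up to sign, `T m S` has endoscopic shape.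
-/

open Matrix

/-- The matrix `J` defining `GSp₄`: `s = [[0,1],[1,0]]`, `J = [[0,s],[-s,0]]`. -/
def J4 (L : Type*) [Field L] : Matrix (Fin 4) (Fin 4) L :=
  !![0, 0, 0, 1; 0, 0, 1, 0; 0, -1, 0, 0; -1, 0, 0, 0]

/-- Membership in `GSp₄(L)`: `mᵀ J m = ν • J` for some `ν ∈ L×`. -/
def InGSp4 {L : Type*} [Field L] (m : Matrix (Fin 4) (Fin 4) L) : Prop :=
  ∃ ν : Lˣ, mᵀ * J4 L * m = (ν : L) • J4 L

/-- Borel shape: upper triangular. -/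
def InB {L : Type*} [Field L] (m : Matrix (Fin 4) (Fin 4) L) : Prop :=
  ∀ i j : Fin 4, (j : ℕ) < (i : ℕ) → m i j = 0

/-- Siegel parabolic shape: `m i j = 0` for `i ∈ {3,4}`, `j ∈ {1,2}` (1-indexed). -/
def InP {L : Type*} [Field L] (m : Matrix (Fin 4) (Fin 4) L) : Prop :=
  ∀ i j : Fin 4, 2 ≤ (i : ℕ) → (j : ℕ) ≤ 1 → m i j = 0

/-- Klingen parabolic shape. -/
def InQ {L : Type*} [Field L] (m : Matrix (Fin 4) (Fin 4) L) : Prop :=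
  m 1 0 = 0 ∧ m 2 0 = 0 ∧ m 3 0 = 0 ∧ m 3 1 = 0 ∧ m 3 2 = 0

/-- Endoscopic subgroup shape: zero outside the indicated eight entries. -/
def InH {L : Type*} [Field L] (m : Matrix (Fin 4) (Fin 4) L) : Prop :=
  ∀ i j : Fin 4,
    ¬(((i = 0 ∨ i = 3) ∧ (j = 0 ∨ j = 3)) ∨ ((i = 1 ∨ i = 2) ∧ (j = 1 ∨ j = 2))) →
      m i j = 0

/-- The conjugate `T g T⁻¹`, as a matrix. -/
def conj4 {L : Type*} [Field L] (T g : (Matrix (Fin 4) (Fin 4) L)ˣ) :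
    Matrix (Fin 4) (Fin 4) L :=
  ((T * g * T⁻¹ : (Matrix (Fin 4) (Fin 4) L)ˣ) : Matrix (Fin 4) (Fin 4) L)


/-- The alternating form `xᵀ J y` in coordinates. -/
def formB {L : Type*} [Field L] (x y : Fin 4 → L) : L :=
  x 0 * y 3 + x 1 * y 2 - x 2 * y 1 - x 3 * y 0

lemma formB_eq {L : Type*} [Field L] (x y : Fin 4 → L) :
    x ⬝ᵥ (J4 L).mulVec y = formB x y := by
  simp [J4, formB, dotProduct, Matrix.mulVec, Fin.sum_univ_four]
  ring

lemma J4_mul_J4 (L : Type*) [Field L] : J4 L * J4 L = -1 := by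
  ext i j
  fin_cases i <;> fin_cases j <;> simp [J4, Matrix.mul_apply, Fin.sum_univ_four]

lemma transpose_mul_J4_mul_apply {L : Type*} [Field L] (A C : Matrix (Fin 4) (Fin 4) L)
    (i j : Fin 4) :
    (Aᵀ * J4 L * C) i j = formB (fun k => A k i) (fun k => C k j) := by
  simp [J4, formB, Matrix.mul_apply, Fin.sum_univ_four]
  ring

/-- An element of `GSp₄` scales the form by its multiplier. -/
lemma formB_mulVec {L : Type*} [Field L] {m : Matrix (Fin 4) (Fin 4) L} {ν : L}
    (h : mᵀ * J4 L * m = ν • J4 L) (x y : Fin 4 → L) :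
    formB (m.mulVec x) (m.mulVec y) = ν * formB x y := by
  rw [← formB_eq, ← formB_eq, Matrix.dotProduct_mulVec, Matrix.vecMul_mulVec,
    ← Matrix.dotProduct_mulVec, Matrix.mulVec_mulVec, h, Matrix.smul_mulVec, dotProduct_smul,
    smul_eq_mul]

/-- The form is nondegenerate on `L⁴`. -/
lemma exists_formB_ne_zero {L : Type*} [Field L] {x : Fin 4 → L} (hx : x ≠ 0) :
    ∃ y, formB x y ≠ 0 := by
  by_contra! h
  apply hx
  have h0 := h ![0, 0, 0, 1]
  have h1 := h ![0, 0, 1, 0]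
  have h2 := h ![0, 1, 0, 0]
  have h3 := h ![1, 0, 0, 0]
  simp [formB] at h0 h1 h2 h3
  ext i
  fin_cases i <;> simpa

/-- A nondegenerate plane `W` has a hyperbolic basis `a, d`, and it can be completed by a
hyperbolic pair `b, c` in the orthogonal complement of `W`. -/
lemma exists_symplectic_basis {L : Type*} [Field L] (W : Submodule L (Fin 4 → L))
    (hW2 : Module.finrank L W = 2)
    (hnd : ∀ x ∈ W, x ≠ 0 → ∃ y ∈ W, formB x y ≠ 0) :
    ∃ a ∈ W, ∃ d ∈ W, ∃ b c : Fin 4 → L, formB a d = 1 ∧ formB b c = 1 ∧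
      (∀ w ∈ W, formB w b = 0) ∧ (∀ w ∈ W, formB w c = 0) := by
  obtain ⟨a, haW, ha⟩ : ∃ a ∈ W, a ≠ 0 := by
    apply W.exists_mem_ne_zero_of_ne_bot
    rintro rfl
    simp at hW2
  obtain ⟨d', hdW', hd'⟩ := hnd a haW ha
  obtain ⟨d, hdW, had⟩ : ∃ d ∈ W, formB a d = 1 := by
    refine ⟨(formB a d')⁻¹ • d', W.smul_mem _ hdW', ?_⟩
    rw [← inv_mul_cancel₀ hd']
    simp only [formB, Pi.smul_apply, smul_eq_mul]
    ring
  have hli : LinearIndependent L ![a, d] := by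
    rw [LinearIndependent.pair_iff]
    intro s t hst
    have e1 : formB a (s • a + t • d) = t * formB a d := by
      simp only [formB, Pi.smul_apply, Pi.add_apply, smul_eq_mul]; ring
    have e2 : formB (s • a + t • d) d = s * formB a d := by
      simp only [formB, Pi.smul_apply, Pi.add_apply, smul_eq_mul]; ring
    rw [hst, had] at e1 e2
    simp [formB] at e1 e2
    exact ⟨e2.symm, e1.symm⟩
  have hspan : Submodule.span L {a, d} = W := by
    apply Submodule.eq_of_le_of_finrank_eq
    · rw [Submodule.span_le]
      rintro x (rfl | rfl) <;> assumption
    · have := finrank_span_eq_card hli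
      rw [Matrix.range_cons_cons_empty] at this
      rw [this, hW2, Fintype.card_fin]
  have hperp : ∀ z, formB a z = 0 → formB d z = 0 → ∀ w ∈ W, formB w z = 0 := by
    intro z h1 h2 w hw
    rw [← hspan, Submodule.mem_span_pair] at hw
    obtain ⟨s, t, rfl⟩ := hw
    have : formB (s • a + t • d) z = s * formB a z + t * formB d z := by
      simp only [formB, Pi.smul_apply, Pi.add_apply, smul_eq_mul]; ring
    rw [this, h1, h2]; simp
  -- Two linear equations on `L⁴` have a nonzero common solution.
  obtain ⟨b, hb, hab, hdb⟩ : ∃ b, b ≠ 0 ∧ formB a b = 0 ∧ formB d b = 0 := by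
    let f : (Fin 4 → L) →ₗ[L] (Fin 2 → L) :=
      { toFun := fun z => ![formB a z, formB d z]
        map_add' := by
          intro x y
          ext i
          fin_cases i <;> simp [formB] <;> ring
        map_smul' := by
          intro r x
          ext i
          fin_cases i <;> simp [formB] <;> ring }
    have hker : LinearMap.ker f ≠ ⊥ := LinearMap.ker_ne_bot_of_finrank_lt (by simp)
    obtain ⟨b, hbf, hb⟩ := Submodule.exists_mem_ne_zero_of_ne_bot hker
    have hbf' : f b = 0 := hbf
    exact ⟨b, hb, by simpa [f] using congrFun hbf' 0, by simpa [f] using congrFun hbf' 1⟩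
  obtain ⟨y, hy⟩ := exists_formB_ne_zero hb
  -- The projection of `y` to the complement of `W`, scaled so that it pairs to `1` with `b`.
  refine ⟨a, haW, d, hdW, b, (formB b y)⁻¹ • (y + formB d y • a - formB a y • d), had, ?_,
    hperp b hab hdb, hperp _ ?_ ?_⟩
  · have : formB b ((formB b y)⁻¹ • (y + formB d y • a - formB a y • d)) =
        (formB b y)⁻¹ * (formB b y - formB d y * formB a b + formB a y * formB d b) := by
      generalize (formB b y)⁻¹ = r
      simp only [formB, Pi.smul_apply, Pi.add_apply, Pi.sub_apply, smul_eq_mul]; ring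
    rw [this, hab, hdb]
    simp [hy]
  · have : formB a ((formB b y)⁻¹ • (y + formB d y • a - formB a y • d)) =
        (formB b y)⁻¹ * (formB a y - formB a y * formB a d) := by
      generalize (formB b y)⁻¹ = r
      simp only [formB, Pi.smul_apply, Pi.add_apply, Pi.sub_apply, smul_eq_mul]; ring
    rw [this, had]; simp
  · have : formB d ((formB b y)⁻¹ • (y + formB d y • a - formB a y • d)) =
        (formB b y)⁻¹ * (formB d y - formB d y * formB a d) := by
      generalize (formB b y)⁻¹ = r
      simp only [formB, Pi.smul_apply, Pi.add_apply, Pi.sub_apply, smul_eq_mul]; ring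
    rw [this, had]; simp

lemma formB_swap {L : Type*} [Field L] (x y : Fin 4 → L) : formB x y = -formB y x := by
  simp only [formB]; ring

lemma formB_self {L : Type*} [Field L] (x : Fin 4 → L) : formB x x = 0 := by
  simp only [formB]; ring

/-- Left multiplication by `J` preserves the endoscopic shape. -/
lemma inH_neg_J4_mul {L : Type*} [Field L] {N : Matrix (Fin 4) (Fin 4) L} (h : InH N) :
    InH (-(J4 L) * N) := by
  intro i j hij
  have h01 := h 0 1 (by decide)
  have h02 := h 0 2 (by decide)
  have h10 := h 1 0 (by decide)
  have h13 := h 1 3 (by decide)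
  have h20 := h 2 0 (by decide)
  have h23 := h 2 3 (by decide)
  have h31 := h 3 1 (by decide)
  have h32 := h 3 2 (by decide)
  fin_cases i <;> fin_cases j <;> first
    | exact absurd (by decide) hij
    | simp [J4, Matrix.mul_apply, Fin.sum_univ_four, h01, h02, h10, h13, h20, h23, h31, h32]

/-- If `σ : G → GSp₄(L)` has a two-dimensional invariant subspace on which the
alternating form is nondegenerate, then after conjugation by some `T ∈ GL₄(L)` its
image lies in the endoscopic subgroup `H(L)`. -/
theorem stmt3 {G L : Type*} [Group G] [Field L] (h2 : (2 : L) ≠ 0)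
    (σ : G →* (Matrix (Fin 4) (Fin 4) L)ˣ)
    (hσ : ∀ g : G, InGSp4 ((σ g : Matrix (Fin 4) (Fin 4) L)))
    (W : Submodule L (Fin 4 → L))
    (hinv : ∀ g : G, ∀ v ∈ W, (σ g : Matrix (Fin 4) (Fin 4) L).mulVec v ∈ W)
    (hW2 : Module.finrank L W = 2)
    (hnd : ∀ x ∈ W, x ≠ 0 → ∃ y ∈ W, x ⬝ᵥ (J4 L).mulVec y ≠ 0) :
    ∃ T : (Matrix (Fin 4) (Fin 4) L)ˣ,
      ∀ g : G, InGSp4 (conj4 T (σ g)) ∧ InH (conj4 T (σ g)) := by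
  simp only [formB_eq] at hnd
  obtain ⟨a, haW, d, hdW, b, c, had, hbc, hb, hc⟩ := exists_symplectic_basis W hW2 hnd
  let S : Matrix (Fin 4) (Fin 4) L := Matrix.of fun i j => ![a, b, c, d] j i
  have hS : Sᵀ * J4 L * S = J4 L := by
    have hab := hb a haW
    have hdb := hb d hdW
    have hac := hc a haW
    have hdc := hc d hdW
    have hba : formB b a = 0 := by rw [formB_swap, hab, neg_zero]
    have hbd : formB b d = 0 := by rw [formB_swap, hdb, neg_zero]
    have hca : formB c a = 0 := by rw [formB_swap, hac, neg_zero]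
    have hcd : formB c d = 0 := by rw [formB_swap, hdc, neg_zero]
    have hda : formB d a = -1 := by rw [formB_swap, had]
    have hcb : formB c b = -1 := by rw [formB_swap, hbc]
    ext i j
    rw [transpose_mul_J4_mul_apply]
    fin_cases i <;> fin_cases j <;> simp [S, J4, formB_self, *]
  have hTS : (-(J4 L) * (Sᵀ * J4 L)) * S = 1 := by
    rw [Matrix.mul_assoc, hS, Matrix.neg_mul, J4_mul_J4, neg_neg]
  let T : (Matrix (Fin 4) (Fin 4) L)ˣ :=
    ⟨-(J4 L) * (Sᵀ * J4 L), S, hTS, mul_eq_one_comm.mp hTS⟩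
  refine ⟨T, fun g => ?_⟩
  obtain ⟨ν, hν⟩ := hσ g
  generalize hm : (σ g : Matrix (Fin 4) (Fin 4) L) = m at hν
  have hconj : conj4 T (σ g) = -(J4 L) * (Sᵀ * J4 L) * m * S := by
    simp [conj4, T, hm]
  have hmW : ∀ v ∈ W, m.mulVec v ∈ W := hm ▸ hinv g
  have hmperp : ∀ z, (∀ w ∈ W, formB w z = 0) → ∀ w ∈ W, formB w (m.mulVec z) = 0 := by
    intro z hz w hw
    have hw' : w = m.mulVec ((σ g⁻¹ : Matrix (Fin 4) (Fin 4) L).mulVec w) := by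
      rw [Matrix.mulVec_mulVec, ← hm, ← Units.val_mul, ← map_mul]
      simp
    rw [hw', formB_mulVec hν, hz _ (hinv g⁻¹ w hw), mul_zero]
  constructor
  · refine ⟨ν, ?_⟩
    set R := -(J4 L) * (Sᵀ * J4 L) with hR
    have hST : S * R = 1 := mul_eq_one_comm.mp hTS
    have hRJ : Rᵀ * J4 L * R = J4 L := by
      calc Rᵀ * J4 L * R = Rᵀ * (Sᵀ * J4 L * S) * R := by rw [hS]
        _ = (S * R)ᵀ * J4 L * (S * R) := by simp only [Matrix.transpose_mul, Matrix.mul_assoc]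
        _ = J4 L := by simp [hST]
    rw [hconj]
    calc (R * m * S)ᵀ * J4 L * (R * m * S)
        = Sᵀ * (mᵀ * (Rᵀ * J4 L * R) * m) * S := by
          simp only [Matrix.transpose_mul, Matrix.mul_assoc]
      _ = (ν : L) • J4 L := by
          rw [hRJ, hν, Matrix.mul_smul, Matrix.smul_mul, hS]
  · have hN : InH (Sᵀ * J4 L * (m * S)) := by
      have e : ∀ j, (fun k => (m * S) k j) = m.mulVec (![a, b, c, d] j) := fun j => rfl
      have eS : ∀ i, (fun k => S k i) = ![a, b, c, d] i := fun i => rfl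
      have h1 : ∀ w ∈ W, formB b (m.mulVec w) = 0 := fun w hw => by
        rw [formB_swap, hb _ (hmW w hw), neg_zero]
      have h2 : ∀ w ∈ W, formB c (m.mulVec w) = 0 := fun w hw => by
        rw [formB_swap, hc _ (hmW w hw), neg_zero]
      have h3 := hmperp b hb
      have h4 := hmperp c hc
      intro i j hij
      rw [transpose_mul_J4_mul_apply, e, eS]
      fin_cases i <;> fin_cases j <;> first
        | exact absurd (by decide) hij
        | exact h1 _ haW
        | exact h1 _ hdW
        | exact h2 _ haW
        | exact h2 _ hdW
        | exact h3 _ haW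
        | exact h3 _ hdW
        | exact h4 _ haW
        | exact h4 _ hdW
    rw [hconj, Matrix.mul_assoc, Matrix.mul_assoc]
    exact inH_neg_J4_mul (by rwa [Matrix.mul_assoc] at hN ⊢)
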